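/- arXiv:2107.14670 — 3 statements merged into one kernel-verified Lean document; each statement's English description precedes it below -/
import Mathlib

section
/- The directional derivative of the special lagrangian angle Θ at a symmetric matrix A in the direction of a symmetric matrix B is given by DΘ(A)·B = Tr((Id + A²)⁻¹ B). -/
/-- The special lagrangian angle of a real symmetric matrix: the sum of the arctangents of its
eigenvalues. -/
noncomputable def slAngle {d : ℕ} (A : Matrix (Fin d) (Fin d) ℝ) : ℝ :=
  if h : A.IsHermitian then ∑ i, Real.arctan (h.eigenvalues i) else 0

/-!
`Θ(A)` is the trace of `arctan(A)`. If `(λᵢ, uᵢ)` and `(μⱼ, vⱼ)` are the eigenpairs of Hermitian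
matrices `A` and `B`, then `tr (f(A) g(B)) = ∑ᵢⱼ |⟨uᵢ, vⱼ⟩|² f(λᵢ) g(μⱼ)`. Hence the first-order
Taylor remainder of `tr f` from `A` to `B` is the sum, with weights `|⟨uᵢ, vⱼ⟩|²`, of the scalar
remainders `f(μⱼ) - f(λᵢ) - f'(λᵢ) (μⱼ - λᵢ)`, while `tr (B - A)²` is the sum of `(μⱼ - λᵢ)²` with
the same weights. If `f'` is `K`-Lipschitz, the remainder is therefore at most `K tr (B - A)²`, and
`tr f` has derivative `tr (f'(A) ·)` at `A`: neither the eigenvalues nor the eigenvectors need to be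
followed along the perturbation.
-/

open Matrix
open scoped NNReal Topology

theorem abs_taylor_remainder_le_of_lipschitzWith_deriv {f f' : ℝ → ℝ} {K : ℝ≥0}
    (hf : ∀ x, HasDerivAt f (f' x) x) (hf' : LipschitzWith K f') (x y : ℝ) :
    |f y - f x - f' x * (y - x)| ≤ K * (y - x) ^ 2 := by
  have hderiv : ∀ z ∈ Set.uIcc x y,
      HasDerivWithinAt (fun z => f z - f' x * z) (f' z - f' x) (Set.uIcc x y) z := fun z _ => by
    simpa using! ((hf z).sub ((hasDerivAt_id z).const_mul (f' x))).hasDerivWithinAt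
  have hbound : ∀ z ∈ Set.uIcc x y, ‖f' z - f' x‖ ≤ K * |y - x| := fun z hz =>
    (hf'.norm_sub_le z x).trans <| by
      gcongr
      exact Set.abs_sub_left_of_mem_uIcc hz
  calc |f y - f x - f' x * (y - x)| = ‖(f y - f' x * y) - (f x - f' x * x)‖ := by
        rw [Real.norm_eq_abs]
        ring_nf
    _ ≤ K * |y - x| * ‖y - x‖ := (convex_uIcc x y).norm_image_sub_le_of_norm_hasDerivWithin_le
        hderiv hbound Set.left_mem_uIcc Set.right_mem_uIcc
    _ = K * (y - x) ^ 2 := by rw [Real.norm_eq_abs, mul_assoc, abs_mul_abs_self, sq]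

section TraceFunction

variable {n 𝕜 : Type*} [RCLike 𝕜] [Fintype n] [DecidableEq n] {A B : Matrix n n 𝕜}

theorem trace_diagonal_mul_mul_diagonal_mul_conjTranspose {m : Type*} [Fintype m] [DecidableEq m]
    (a : m → ℝ) (b : n → ℝ) (W : Matrix m n 𝕜) :
    ((diagonal (RCLike.ofReal ∘ a) : Matrix m m 𝕜) * W *
      (diagonal (RCLike.ofReal ∘ b) : Matrix n n 𝕜) * Wᴴ).trace =
      ((∑ i, ∑ j, ‖W i j‖ ^ 2 * (a i * b j) : ℝ) : 𝕜) := by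
  rw [trace]
  push_cast
  refine Finset.sum_congr rfl fun i _ => ?_
  rw [diag_apply, mul_apply]
  refine Finset.sum_congr rfl fun j _ => ?_
  rw [mul_diagonal, diagonal_mul, conjTranspose_apply, RCLike.star_def, ← RCLike.mul_conj]
  simp only [Function.comp_apply]
  ring

/-- The overlap `|⟨uᵢ, vⱼ⟩|²` of the `i`-th eigenvector of `A` with the `j`-th eigenvector of `B`,
written as the squared modulus of an entry of the unitary matrix that changes one eigenbasis into
the other. Traces of products `f(A) g(B)` are sums weighted by it. -/
noncomputable def eigenvectorOverlap (hA : A.IsHermitian) (hB : B.IsHermitian) (i j : n) : ℝ :=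
  ‖(star (hA.eigenvectorUnitary : Matrix n n 𝕜) * (hB.eigenvectorUnitary : Matrix n n 𝕜)) i j‖ ^ 2

theorem eigenvectorOverlap_nonneg (hA : A.IsHermitian) (hB : B.IsHermitian) (i j : n) :
    0 ≤ eigenvectorOverlap hA hB i j :=
  sq_nonneg _

theorem trace_cfc (hA : A.IsHermitian) (f : ℝ → ℝ) :
    (cfc f A).trace = ((∑ i, f (hA.eigenvalues i) : ℝ) : 𝕜) := by
  rw [hA.cfc_eq, IsHermitian.cfc, Unitary.conjStarAlgAut_apply, trace_mul_comm, ← mul_assoc]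
  simp [trace]

theorem trace_cfc_mul_cfc (hA : A.IsHermitian) (hB : B.IsHermitian) (f g : ℝ → ℝ) :
    (cfc f A * cfc g B).trace = ((∑ i, ∑ j, eigenvectorOverlap hA hB i j *
      (f (hA.eigenvalues i) * g (hB.eigenvalues j)) : ℝ) : 𝕜) := by
  let U : Matrix n n 𝕜 := (hA.eigenvectorUnitary : Matrix n n 𝕜)
  let V : Matrix n n 𝕜 := (hB.eigenvectorUnitary : Matrix n n 𝕜)
  let D : Matrix n n 𝕜 := diagonal (RCLike.ofReal ∘ f ∘ hA.eigenvalues)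
  let E : Matrix n n 𝕜 := diagonal (RCLike.ofReal ∘ g ∘ hB.eigenvalues)
  calc (cfc f A * cfc g B).trace = (U * D * star U * (V * E * star V)).trace := by
        rw [hA.cfc_eq, hB.cfc_eq, IsHermitian.cfc, IsHermitian.cfc,
          Unitary.conjStarAlgAut_apply, Unitary.conjStarAlgAut_apply]
    _ = (D * (star U * V) * E * (star U * V)ᴴ).trace := by
        rw [← star_eq_conjTranspose, star_mul, star_star, ← mul_assoc _ (star V) U,
          trace_mul_comm _ U]
        simp only [mul_assoc]
    _ = _ := trace_diagonal_mul_mul_diagonal_mul_conjTranspose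
        (f ∘ hA.eigenvalues) (g ∘ hB.eigenvalues) (star U * V)

theorem trace_sub_mul_self_eq_sum (hA : A.IsHermitian) (hB : B.IsHermitian) :
    ((B - A) * (B - A)).trace = ((∑ i, ∑ j, eigenvectorOverlap hA hB i j *
      (hB.eigenvalues j - hA.eigenvalues i) ^ 2 : ℝ) : 𝕜) := by
  have hA' : IsSelfAdjoint A := hA
  have hB' : IsSelfAdjoint B := hB
  have expand : ((B - A) * (B - A)).trace =
      (cfc (1 : ℝ → ℝ) A * cfc (fun x : ℝ => x ^ 2) B).trace
        - 2 * (cfc (id : ℝ → ℝ) A * cfc (id : ℝ → ℝ) B).trace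
        + (cfc (fun x : ℝ => x ^ 2) A * cfc (1 : ℝ → ℝ) B).trace := by
    rw [cfc_one ℝ A, cfc_one ℝ B, cfc_id ℝ A, cfc_id ℝ B, cfc_pow_id A 2, cfc_pow_id B 2,
      sub_mul, mul_sub, mul_sub, trace_sub, trace_sub, trace_sub, trace_mul_comm B A, sq, sq,
      one_mul, mul_one]
    ring
  rw [expand]
  simp only [trace_cfc_mul_cfc hA hB, Pi.one_apply, id_eq]
  norm_cast
  simp only [Finset.mul_sum, ← Finset.sum_sub_distrib, ← Finset.sum_add_distrib]
  refine Finset.sum_congr rfl fun i _ => Finset.sum_congr rfl fun j _ => ?_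
  ring

theorem trace_cfc_taylor_remainder_eq_sum (hA : A.IsHermitian) (hB : B.IsHermitian) (f g : ℝ → ℝ) :
    (cfc f B).trace - (cfc f A).trace - (cfc g A * (B - A)).trace =
      ((∑ i, ∑ j, eigenvectorOverlap hA hB i j *
        (f (hB.eigenvalues j) - f (hA.eigenvalues i)
          - g (hA.eigenvalues i) * (hB.eigenvalues j - hA.eigenvalues i)) : ℝ) : 𝕜) := by
  have hA' : IsSelfAdjoint A := hA
  have hB' : IsSelfAdjoint B := hB
  have hg : cfc g A * A = cfc (fun x => g x * x) A := by
    rw [cfc_mul g (fun x => x) A (A.finite_real_spectrum.continuousOn g), cfc_id' ℝ A]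
  have expand : (cfc f B).trace - (cfc f A).trace - (cfc g A * (B - A)).trace =
      (cfc (1 : ℝ → ℝ) A * cfc f B).trace - (cfc f A * cfc (1 : ℝ → ℝ) B).trace
        - ((cfc g A * cfc (id : ℝ → ℝ) B).trace
          - (cfc (fun x => g x * x) A * cfc (1 : ℝ → ℝ) B).trace) := by
    rw [cfc_one ℝ A, cfc_one ℝ B, cfc_id ℝ B, ← hg, one_mul, mul_one, mul_one, mul_sub, trace_sub]
  rw [expand]
  simp only [trace_cfc_mul_cfc hA hB, Pi.one_apply, id_eq]
  norm_cast
  simp only [← Finset.sum_sub_distrib]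
  refine Finset.sum_congr rfl fun i _ => Finset.sum_congr rfl fun j _ => ?_
  ring

theorem norm_trace_cfc_taylor_remainder_le (hA : A.IsHermitian) (hB : B.IsHermitian)
    {f g : ℝ → ℝ} {C : ℝ}
    (h : ∀ x ∈ spectrum ℝ A, ∀ y ∈ spectrum ℝ B, |f y - f x - g x * (y - x)| ≤ C * (y - x) ^ 2) :
    ‖(cfc f B).trace - (cfc f A).trace - (cfc g A * (B - A)).trace‖ ≤
      C * RCLike.re ((B - A) * (B - A)).trace := by
  rw [trace_cfc_taylor_remainder_eq_sum hA hB, trace_sub_mul_self_eq_sum hA hB, RCLike.norm_ofReal,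
    RCLike.ofReal_re, Finset.mul_sum]
  refine (Finset.abs_sum_le_sum_abs _ _).trans <| Finset.sum_le_sum fun i _ => ?_
  rw [Finset.mul_sum]
  refine (Finset.abs_sum_le_sum_abs _ _).trans <| Finset.sum_le_sum fun j _ => ?_
  rw [abs_mul, abs_of_nonneg (eigenvectorOverlap_nonneg hA hB i j), mul_left_comm]
  gcongr
  · exact eigenvectorOverlap_nonneg hA hB i j
  · exact h _ (hA.eigenvalues_mem_spectrum_real i) _ (hB.eigenvalues_mem_spectrum_real j)

theorem hasDerivAt_trace_cfc_add_smul (hA : A.IsHermitian) (hB : B.IsHermitian) {f f' : ℝ → ℝ}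
    {K : ℝ≥0} (hf : ∀ x, HasDerivAt f (f' x) x) (hf' : LipschitzWith K f') :
    HasDerivAt (fun t : ℝ => (cfc f (A + t • B)).trace) (cfc f' A * B).trace 0 := by
  have remainder_le (t : ℝ) :
      ‖(cfc f (A + t • B)).trace - (cfc f A).trace - t • (cfc f' A * B).trace‖ ≤
        K * RCLike.re (B * B).trace * ‖‖t‖ ^ 2‖ := by
    have hAB : (A + t • B).IsHermitian := hA.add (hB.smul (IsSelfAdjoint.all t))
    have bound := norm_trace_cfc_taylor_remainder_le hA hAB fun x _ y _ =>
      abs_taylor_remainder_le_of_lipschitzWith_deriv hf hf' x y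
    simp only [add_sub_cancel_left, mul_smul_comm, smul_mul_assoc, trace_smul, RCLike.smul_re]
      at bound
    calc _ ≤ _ := bound
      _ = K * RCLike.re (B * B).trace * ‖‖t‖ ^ 2‖ := by
        rw [norm_pow, norm_norm, Real.norm_eq_abs, sq_abs]
        ring
  have remainder_isBigO := Asymptotics.IsBigO.of_bound _ (.of_forall (f := 𝓝 0) remainder_le)
  have sq_isLittleO : (fun t : ℝ => ‖t‖ ^ 2) =o[𝓝 0] fun t => t :=
    Asymptotics.isLittleO_norm_pow_id one_lt_two
  rw [hasDerivAt_iff_isLittleO]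
  simpa only [zero_smul, add_zero, sub_zero] using remainder_isBigO.trans_isLittleO sq_isLittleO

end TraceFunction

theorem lipschitzWith_inv_one_add_sq : LipschitzWith 1 fun x : ℝ => (1 + x ^ 2)⁻¹ := by
  refine LipschitzWith.of_dist_le_mul fun x y => ?_
  have hpos : 0 < (1 + x ^ 2) * (1 + y ^ 2) := by positivity
  have difference : (1 + x ^ 2)⁻¹ - (1 + y ^ 2)⁻¹ =
      (y - x) * (x + y) / ((1 + x ^ 2) * (1 + y ^ 2)) := by
    field_simp
    ring
  have sum_le : |x + y| ≤ (1 + x ^ 2) * (1 + y ^ 2) :=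
    abs_le.2 ⟨by nlinarith [sq_nonneg (x + 1), sq_nonneg (y + 1), sq_nonneg (x * y)],
      by nlinarith [sq_nonneg (x - 1), sq_nonneg (y - 1), sq_nonneg (x * y)]⟩
  rw [Real.dist_eq, Real.dist_eq, difference, abs_div, abs_mul, abs_of_pos hpos, NNReal.coe_one,
    one_mul, abs_sub_comm y x, div_le_iff₀ hpos]
  gcongr

theorem cfc_inv_one_add_sq {n 𝕜 : Type*} [RCLike 𝕜] [Fintype n] [DecidableEq n]
    {A : Matrix n n 𝕜} (hA : A.IsHermitian) :
    cfc (fun x : ℝ => (1 + x ^ 2)⁻¹) A = (1 + A * A)⁻¹ := by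
  have hA' : IsSelfAdjoint A := hA
  rw [cfc_inv (fun x : ℝ => 1 + x ^ 2) A fun x _ => by positivity, ← nonsing_inv_eq_ringInverse,
    cfc_const_add (1 : ℝ) (fun x => x ^ 2) A, cfc_pow_id A 2, map_one, sq]

theorem slAngle_eq_trace_cfc_arctan {d : ℕ} {A : Matrix (Fin d) (Fin d) ℝ} (hA : A.IsHermitian) :
    slAngle A = (cfc Real.arctan A).trace := by
  rw [slAngle, dif_pos hA, trace_cfc hA, RCLike.ofReal_real_eq_id, id]

/-- The directional derivative of the special lagrangian angle Θ at a symmetric matrix A in the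
direction of a symmetric matrix B is DΘ(A)·B = Tr((Id + A²)⁻¹ B). -/
theorem slAngle_directional_deriv {d : ℕ} (A B : Matrix (Fin d) (Fin d) ℝ)
    (hA : A.IsSymm) (hB : B.IsSymm) :
    HasDerivAt (fun t : ℝ => slAngle (A + t • B))
      (Matrix.trace ((1 + A * A)⁻¹ * B)) 0 := by
  have hA' : A.IsHermitian := (conjTranspose_eq_transpose_of_trivial A).trans hA
  have hB' : B.IsHermitian := (conjTranspose_eq_transpose_of_trivial B).trans hB
  have hAB (t : ℝ) : (A + t • B).IsHermitian := hA'.add (hB'.smul (IsSelfAdjoint.all t))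
  simp only [slAngle_eq_trace_cfc_arctan (hAB _), ← cfc_inv_one_add_sq hA']
  exact hasDerivAt_trace_cfc_add_smul hA' hB' Real.hasDerivAt_arctan' lipschitzWith_inv_one_add_sq
end

section
/- Let d ≥ 2, let S be a topological d-sphere, Y a connected d-manifold, and φ : Y → S a local homeomorphism. Suppose there is an open subset U ⊆ Y such that φ|_U is a covering map onto S ∖ F for a finite set F of cardinality k ≤ 2. Then φ itself is a covering map onto S ∖ F' for some finite F' ⊆ S with |F'| ≤ k. -/
/-! Since `Y` is a manifold of dimension at least two, `φ ⁻¹' Fᶜ` is path-connected, and lifting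
paths shows that it equals `U`. If `φ` misses `F` we are done. Otherwise let `x = φ y₀ ∈ F`, choose
`f ≠ x` with `F ⊆ {x, f}` and push `A = S \ {x, f}` radially, away from `f`, into a neighbourhood
of `x` on which `φ` has a local inverse. Lifting this homotopy to `φ ⁻¹' Fᶜ` yields a continuous
section of `φ` over `A`. The section composed with `φ` agrees with the identity somewhere on the
connected set `φ ⁻¹' A`, hence everywhere on it, so `φ` is injective on a dense saturated set.
Consequently `φ` is injective, that is, a homeomorphism onto its image. -/

open Set Filter Topology

section LocallyPunctureConnected

/-- Every point has arbitrarily small neighbourhoods that remain connected, and in particular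
nonempty, when the point is removed. This is the property of manifolds of dimension at least two
which makes complements of closed discrete sets connected. -/
def LocallyPunctureConnected (X : Type*) [TopologicalSpace X] : Prop :=
  ∀ x : X, ∀ N ∈ 𝓝 x, ∃ B ∈ 𝓝 x, B ⊆ N ∧ IsConnected (B \ {x})

theorem isConnected_ball_sdiff_center {E : Type*} [NormedAddCommGroup E] [NormedSpace ℝ E]
    (hE : 1 < Module.rank ℝ E) (p : E) {r : ℝ} (hr : 0 < r) :
    IsConnected (Metric.ball p r \ {p}) := by
  let e := OpenPartialHomeomorph.univBall p r
  have he : e.source = univ := OpenPartialHomeomorph.univBall_source p r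
  have hcont : Continuous e := by
    rw [← continuousOn_univ, ← he]
    exact e.continuousOn
  have himage : e '' {0}ᶜ = Metric.ball p r \ {p} := by
    have hinj : InjOn e univ := he ▸ e.injOn
    rw [compl_eq_univ_sdiff, hinj.image_sdiff_subset (subset_univ _), image_singleton,
      OpenPartialHomeomorph.univBall_apply_zero, ← he, e.image_source_eq_target,
      OpenPartialHomeomorph.univBall_target p hr]
  exact himage ▸ (isConnected_compl_singleton_of_one_lt_rank hE 0).image e hcont.continuousOn

theorem LocallyPunctureConnected.of_chartedSpace {E : Type*} [NormedAddCommGroup E]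
    [NormedSpace ℝ E] (hE : 1 < Module.rank ℝ E) (X : Type*) [TopologicalSpace X]
    [ChartedSpace E X] : LocallyPunctureConnected X := by
  intro x N hN
  let c := chartAt E x
  have hx : x ∈ c.source := mem_chart_source E x
  have hN' : c.target ∩ c.symm ⁻¹' N ∈ 𝓝 (c x) :=
    inter_mem (c.open_target.mem_nhds (c.map_source hx))
      ((c.continuousAt_symm (c.map_source hx)).preimage_mem_nhds (by rwa [c.left_inv hx]))
  obtain ⟨r, hr, hball⟩ := Metric.mem_nhds_iff.1 hN'
  have htarget : Metric.ball (c x) r ⊆ c.target := hball.trans inter_subset_left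
  refine ⟨c.symm '' Metric.ball (c x) r, ?_,
    image_subset_iff.2 (hball.trans inter_subset_right), ?_⟩
  · simpa only [c.left_inv hx] using
      c.symm.image_mem_nhds (c.map_source hx) (Metric.ball_mem_nhds (c x) hr)
  · have himage : c.symm '' (Metric.ball (c x) r \ {c x}) =
        c.symm '' Metric.ball (c x) r \ {x} := by
      rw [(c.symm.injOn.mono htarget).image_sdiff_subset
        (singleton_subset_iff.2 (Metric.mem_ball_self hr)), image_singleton, c.left_inv hx]
    exact himage ▸ (isConnected_ball_sdiff_center hE (c x) hr).image c.symm
      (c.continuousOn_symm.mono (sdiff_subset.trans htarget))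

variable {X : Type*} [TopologicalSpace X]

theorem LocallyPunctureConnected.dense_of_mem_codiscrete (hX : LocallyPunctureConnected X)
    {s : Set X} (hs : s ∈ codiscrete X) : Dense s := by
  refine fun x => mem_closure_iff_nhds.2 fun N hN => ?_
  obtain ⟨V, hV, hVs⟩ := mem_nhdsWithin_iff_exists_mem_nhds_inter.1
    (disjoint_principal_right.1 (mem_codiscrete.1 hs x))
  obtain ⟨B, -, hBN, hB⟩ := hX x (N ∩ V) (inter_mem hN hV)
  obtain ⟨b, hbB, hbx⟩ := hB.nonempty
  rw [compl_compl] at hVs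
  exact ⟨b, (hBN hbB).1, hVs ⟨(hBN hbB).2, hbx⟩⟩

/-- If `B \ {x}` is connected and covered by two disjoint open sets, the one having `x` in its
closure contains `B \ {x}`. -/
theorem LocallyPunctureConnected.closure_mem_nhds (hX : LocallyPunctureConnected X) {u v : Set X}
    (hu : IsOpen u) (hv : IsOpen v) (huv : Disjoint u v) (hs : u ∪ v ∈ codiscrete X) {x : X}
    (hx : x ∈ closure u) : closure u ∈ 𝓝 x := by
  by_cases hxu : x ∈ u
  · exact mem_of_superset (hu.mem_nhds hxu) subset_closure
  obtain ⟨V, hV, hVs⟩ := mem_nhdsWithin_iff_exists_mem_nhds_inter.1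
    (disjoint_principal_right.1 (mem_codiscrete.1 hs x))
  rw [compl_compl] at hVs
  obtain ⟨B, hB, hBV, hBconn⟩ := hX x V hV
  obtain ⟨b, hbB, hbu⟩ := mem_closure_iff_nhds.1 hx B hB
  have hBu : B \ {x} ⊆ u :=
    hBconn.isPreconnected.subset_left_of_subset_union hu hv huv
      ((sdiff_subset_sdiff_left hBV).trans hVs)
      ⟨b, ⟨hbB, fun hbx => hxu (hbx ▸ hbu)⟩, hbu⟩
  exact mem_of_superset hB (sdiff_singleton_subset_iff.1 (hBu.trans subset_closure)
    |>.trans (insert_subset hx subset_rfl))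

theorem LocallyPunctureConnected.isConnected_of_mem_codiscrete [ConnectedSpace X]
    (hX : LocallyPunctureConnected X) {s : Set X} (hs : s ∈ codiscrete X) : IsConnected s := by
  refine ⟨(hX.dense_of_mem_codiscrete hs).nonempty, fun u v hu hv hsuv hsu hsv => ?_⟩
  by_contra hdisj
  have hso : IsOpen s := (mem_codiscrete'.1 hs).1
  have huv : Disjoint (s ∩ u) (s ∩ v) := by
    rw [disjoint_iff_inter_eq_empty, ← inter_inter_distrib_left]
    exact not_nonempty_iff_eq_empty.1 hdisj
  have hcover : s ∩ u ∪ s ∩ v ∈ codiscrete X := by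
    rwa [← inter_union_distrib_left, inter_eq_left.2 hsuv]
  have hopen : IsOpen (closure (s ∩ u)) := isOpen_iff_mem_nhds.2 fun _ =>
    hX.closure_mem_nhds (hso.inter hu) (hso.inter hv) huv hcover
  have huniv : closure (s ∩ u) = univ := IsClopen.eq_univ ⟨isClosed_closure, hopen⟩ hsu.closure
  have hempty := huv.closure_left (hso.inter hv)
  rw [huniv, univ_disjoint] at hempty
  exact hsv.ne_empty hempty

theorem LocallyPunctureConnected.isPathConnected_of_mem_codiscrete [ConnectedSpace X]
    [LocallyPathConnectedSpace X] (hX : LocallyPunctureConnected X) {s : Set X}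
    (hs : s ∈ codiscrete X) : IsPathConnected s :=
  (mem_codiscrete'.1 hs).1.isConnected_iff_isPathConnected.1 (hX.isConnected_of_mem_codiscrete hs)

theorem preimage_mem_codiscrete {S : Type*} [TopologicalSpace S] {φ : X → S}
    (hφ : Continuous φ) (hinj : IsLocallyInjective φ) {T : Set S} (hT : T ∈ codiscrete S) :
    φ ⁻¹' T ∈ codiscrete X := by
  refine mem_codiscrete.2 fun x => disjoint_principal_right.2 ?_
  have hTx : T ∈ 𝓝[≠] φ x := by
    simpa only [compl_compl] using disjoint_principal_right.1 (mem_codiscrete.1 hT (φ x))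
  obtain ⟨N, hN, hxN, hinjN⟩ := hinj x
  have hne : ∀ᶠ z in 𝓝[≠] x, φ z ∈ ({φ x} : Set S)ᶜ := by
    filter_upwards [self_mem_nhdsWithin, mem_nhdsWithin_of_mem_nhds (hN.mem_nhds hxN)]
      with z hzx hzN hz using hzx (hinjN hzN hxN hz)
  rw [compl_compl]
  exact tendsto_nhdsWithin_iff.2 ⟨(hφ.tendsto x).mono_left nhdsWithin_le_nhds, hne⟩ hTx

end LocallyPunctureConnected

section DeformsIntoNhds

/-- The set `A` can be deformed within itself into any neighbourhood of `x`. For `A` a punctured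
neighbourhood of `x`, this replaces surjectivity on `π₁` of the inclusions into `A` of smaller
punctured neighbourhoods. -/
def DeformsIntoNhds {X : Type*} [TopologicalSpace X] (A : Set X) (x : X) : Prop :=
  ∀ O ∈ 𝓝 x, ∃ g : C(A, A), (ContinuousMap.id A).Homotopic g ∧ ∀ a, (g a : X) ∈ O

theorem DeformsIntoNhds.image {X Z : Type*} [TopologicalSpace X] [TopologicalSpace Z] {A : Set X}
    {x : X} (hA : DeformsIntoNhds A x) {i : X → Z} (hi : IsEmbedding i) :
    DeformsIntoNhds (i '' A) (i x) := by
  intro O hO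
  obtain ⟨g, hg, hgO⟩ := hA (i ⁻¹' O) (hi.continuous.continuousAt hO)
  let h : A ≃ₜ i '' A := hi.homeomorphImage A
  refine ⟨(h : C(A, i '' A)).comp (g.comp h.symm), ?_, fun a => hgO (h.symm a)⟩
  simpa using (ContinuousMap.Homotopic.refl (h : C(A, i '' A))).comp
    (hg.comp (.refl (h.symm : C(i '' A, A))))

theorem deformsIntoNhds_compl_singleton {E : Type*} [NormedAddCommGroup E] [NormedSpace ℝ E]
    (p : E) : DeformsIntoNhds {p}ᶜ p := by
  intro O hO
  obtain ⟨r, hr, hrO⟩ := Metric.mem_nhds_iff.1 hO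
  let scale : unitInterval × ({p}ᶜ : Set E) → ℝ := fun q => r / (r + q.1 * ‖(q.2 : E) - p‖)
  have hdenom : ∀ q : unitInterval × ({p}ᶜ : Set E), 0 < r + q.1 * ‖(q.2 : E) - p‖ := fun q =>
    add_pos_of_pos_of_nonneg hr (mul_nonneg q.1.2.1 (norm_nonneg _))
  have hsub : ∀ v : ({p}ᶜ : Set E), (v : E) - p ≠ 0 := fun v => sub_ne_zero.2 v.2
  have hscale : Continuous scale := by
    refine continuous_const.div (by fun_prop) fun q => (hdenom q).ne'
  let H : C(unitInterval × ({p}ᶜ : Set E), ({p}ᶜ : Set E)) :=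
    ⟨fun q => ⟨p + scale q • ((q.2 : E) - p), fun h => smul_ne_zero
        (div_pos hr (hdenom q)).ne' (hsub q.2) (add_eq_left.1 h)⟩, by fun_prop⟩
  refine ⟨H.curry 1, ⟨⟨H, fun v => ?_, fun v => rfl⟩⟩, fun v => hrO ?_⟩
  · ext
    simp [H, scale, hr.ne']
  · have hnorm : 0 < ‖(v : E) - p‖ := norm_pos_iff.2 (hsub v)
    rw [mem_ball_iff_norm]
    calc ‖p + scale (1, v) • ((v : E) - p) - p‖
        = r / (r + ‖(v : E) - p‖) * ‖(v : E) - p‖ := by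
          simp [scale, norm_smul, abs_of_pos hr, abs_of_pos (add_pos hr hnorm)]
      _ < r := by
          rw [div_mul_eq_mul_div, div_lt_iff₀ (by positivity)]
          nlinarith

theorem deformsIntoNhds_compl_pair_of_sphere {V S : Type*} [NormedAddCommGroup V]
    [InnerProductSpace ℝ V] [TopologicalSpace S] (h : S ≃ₜ Metric.sphere (0 : V) 1) {x f : S}
    (hxf : x ≠ f) : DeformsIntoNhds {x, f}ᶜ x := by
  let i := h.symm ∘ (stereographic (norm_eq_of_mem_sphere (h f))).symm
  have hi : IsOpenEmbedding i := h.symm.isOpenEmbedding.comp (isOpenEmbedding_stereographic_symm _)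
  have hrange : range i = {f}ᶜ := by
    rw [range_comp, range_stereographic_symm _ (h f).2, image_compl_eq h.symm.bijective,
      image_singleton, Subtype.coe_eta, h.symm_apply_apply]
  obtain ⟨p, rfl⟩ : x ∈ range i := hrange ▸ hxf
  have himage : i '' {p}ᶜ = {i p, f}ᶜ := by
    rw [image_compl_eq_range_sdiff_image hi.injective, hrange, image_singleton, insert_eq,
      compl_union, inter_comm, sdiff_eq]
  exact himage ▸ (deformsIntoNhds_compl_singleton p).image hi.isEmbedding

end DeformsIntoNhds

section Covering

theorem exists_lift_of_homotopic {A X Z : Type*} [TopologicalSpace A] [TopologicalSpace X]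
    [TopologicalSpace Z] {p : X → Z} (hp : IsCoveringMap p) {f₀ f₁ : C(A, Z)}
    (hf : f₀.Homotopic f₁) {g₀ : C(A, X)} (hg₀ : ∀ a, p (g₀ a) = f₀ a) :
    ∃ g₁ : C(A, X), ∀ a, p (g₁ a) = f₁ a := by
  obtain ⟨H⟩ := hf
  have hH : ∀ a, H.toContinuousMap (0, a) = p (g₀ a) := fun a =>
    (H.map_zero_left a).trans (hg₀ a).symm
  let L := hp.liftHomotopy H.toContinuousMap g₀ hH
  refine ⟨L.curry 1, fun a => ?_⟩
  exact (congrFun (hp.liftHomotopy_lifts H.toContinuousMap g₀ hH) (1, a)).trans (H.map_one_left a)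

variable {Y S : Type*} [TopologicalSpace Y] [TopologicalSpace S] {φ : Y → S}

/-- `φ` is a covering map onto the subset `T` of its codomain; in particular `range φ = T`.
For `T` the complement of a finite set of cardinality `k` this is finite type `k`. -/
def IsCoveringMapOnto (φ : Y → S) (T : Set S) : Prop :=
  ∃ h : ∀ y, φ y ∈ T, IsCoveringMap (codRestrict φ T h) ∧ Function.Surjective (codRestrict φ T h)

theorem IsCoveringMapOnto.mem_of_joinedIn_preimage {U : Set Y} {T : Set S}
    (hU : IsCoveringMapOnto (U.domRestrict φ) T) (hφ : Continuous φ) (hsep : IsSeparatedMap φ)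
    (hinj : IsLocallyInjective φ) {u y : Y} (hu : u ∈ U) (huy : JoinedIn (φ ⁻¹' T) u y) :
    y ∈ U := by
  obtain ⟨_, hcov, -⟩ := hU
  obtain ⟨γ, hγ⟩ := huy
  let δ : C(unitInterval, T) := ⟨fun t => ⟨φ (γ t), hγ t⟩, by fun_prop⟩
  obtain ⟨Γ, hΓ, hΓ0⟩ := hcov.exists_path_lifts δ ⟨u, hu⟩ (Subtype.ext (congrArg φ γ.source))
  have heq : Subtype.val ∘ Γ = γ :=
    hsep.eq_of_comp_eq hinj (by fun_prop) γ.continuous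
      (funext fun t => congrArg Subtype.val (congrFun hΓ t)) 0
      ((congrArg Subtype.val hΓ0).trans γ.source.symm)
  have hend : (Γ 1 : Y) = y := (congrFun heq 1).trans γ.target
  exact hend ▸ (Γ 1).2

theorem IsCoveringMapOnto.eq_preimage {U : Set Y} {T : Set S}
    (hU : IsCoveringMapOnto (U.domRestrict φ) T) (hφ : Continuous φ) (hsep : IsSeparatedMap φ)
    (hinj : IsLocallyInjective φ) (hT : IsPathConnected (φ ⁻¹' T)) : U = φ ⁻¹' T := by
  obtain ⟨hUT, -, hsurj⟩ := id hU
  obtain ⟨y, hy⟩ := hT.nonempty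
  obtain ⟨u, -⟩ := hsurj ⟨φ y, hy⟩
  exact Subset.antisymm (fun v hv => hUT ⟨v, hv⟩) fun z hz =>
    hU.mem_of_joinedIn_preimage hφ hsep hinj u.2 (hT.joinedIn u (hUT u) z hz)

theorem IsCoveringMapOnto.of_restrict_preimage {T : Set S}
    (h : IsCoveringMapOnto ((φ ⁻¹' T).domRestrict φ) T) (hT : ∀ y, φ y ∈ T) :
    IsCoveringMapOnto φ T := by
  obtain ⟨_, hcov, hsurj⟩ := h
  have huniv : univ = φ ⁻¹' T := (eq_univ_of_forall hT).symm
  let e : Y ≃ₜ φ ⁻¹' T := (Homeomorph.Set.univ Y).symm.trans (Homeomorph.setCongr huniv)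
  exact ⟨hT, hcov.comp_homeomorph e, hsurj.comp e.surjective⟩

theorem exists_section_of_deformsIntoNhds (hφ : IsLocalHomeomorph φ) {T A : Set S}
    (hcov : IsCoveringMap (T.restrictPreimage φ)) (hAT : A ⊆ T) {y : Y}
    (hA : DeformsIntoNhds A (φ y)) : ∃ s : C(A, Y), ∀ a, φ (s a) = a := by
  obtain ⟨e, hy, rfl⟩ := hφ y
  obtain ⟨g, hg, hge⟩ := hA e.target (e.open_target.mem_nhds (e.map_source hy))
  let j : C(A, T) := ⟨inclusion hAT, continuous_inclusion hAT⟩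
  have hlift : ∀ a, e (e.symm (g a)) = g a := fun a => e.right_inv (hge a)
  have hmem : ∀ a, e.symm (g a) ∈ e ⁻¹' T := fun a => by
    rw [mem_preimage, hlift]
    exact hAT (g a).2
  let g₀ : C(A, e ⁻¹' T) := ⟨fun a => ⟨e.symm (g a), hmem a⟩,
    (e.continuousOn_symm.comp_continuous (by fun_prop) hge).subtype_mk hmem⟩
  obtain ⟨g₁, hg₁⟩ := exists_lift_of_homotopic hcov ((ContinuousMap.Homotopic.refl j).comp hg.symm)
    (g₀ := g₀) fun a => Subtype.ext (hlift a)
  exact ⟨⟨fun a => g₁ a, by fun_prop⟩, fun a => congrArg Subtype.val (hg₁ a)⟩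

theorem injOn_preimage_of_section (hφ : Continuous φ) (hsep : IsSeparatedMap φ)
    (hinj : IsLocallyInjective φ) {A : Set S} (hA : IsPreconnected (φ ⁻¹' A)) (s : C(A, Y))
    (hs : ∀ a, φ (s a) = a) : InjOn φ (φ ⁻¹' A) := by
  have hleft : ∀ y (hy : y ∈ φ ⁻¹' A), s ⟨φ y, hy⟩ = y := by
    intro y hy
    have := isPreconnected_iff_preconnectedSpace.1 hA
    have hmem : s ⟨φ y, hy⟩ ∈ φ ⁻¹' A := by rw [mem_preimage, hs]; exact hy
    have heq : s ∘ A.restrictPreimage φ = Subtype.val :=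
      hsep.eq_of_comp_eq hinj (s.continuous.comp hφ.restrictPreimage) continuous_subtype_val
        (funext fun z => hs _) ⟨s ⟨φ y, hy⟩, hmem⟩ (congrArg s (Subtype.ext (hs _)))
    exact congrFun heq ⟨y, hy⟩
  intro y hy z hz hyz
  rw [← hleft y hy, ← hleft z hz]
  exact congrArg s (Subtype.ext hyz)

theorem injective_of_injOn_preimage [T2Space Y] (hφ : Continuous φ) (hopen : IsOpenMap φ)
    {A : Set S} (hdense : Dense (φ ⁻¹' A)) (hinj : InjOn φ (φ ⁻¹' A)) : Function.Injective φ := by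
  intro y z hyz
  by_contra hne
  obtain ⟨V, W, hV, hW, hyV, hzW, hVW⟩ := t2_separation hne
  obtain ⟨v, ⟨hvV, w, hwW, hwv⟩, hvA⟩ := hdense.inter_open_nonempty (V ∩ φ ⁻¹' (φ '' W))
    (hV.inter ((hopen W hW).preimage hφ)) ⟨y, hyV, z, hzW, hyz.symm⟩
  have hwA : w ∈ φ ⁻¹' A := by rwa [mem_preimage, hwv]
  exact hVW.le_bot ⟨hvV, hinj hwA hvA hwv ▸ hwW⟩

theorem isCoveringMap_of_homeomorph {X Z : Type*} [TopologicalSpace X] [TopologicalSpace Z]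
    (h : X ≃ₜ Z) : IsCoveringMap h := fun z =>
  IsEvenlyCovered.to_isEvenlyCovered_preimage (I := Unit)
    ⟨inferInstance, univ, mem_univ z, isOpen_univ, isOpen_univ,
      ((Homeomorph.Set.univ X).trans h).trans
        ((Homeomorph.Set.univ Z).symm.trans (Homeomorph.prodUnique _ Unit).symm), fun _ => rfl⟩

theorem isCoveringMapOnto_range_of_injective (hφ : IsLocalHomeomorph φ)
    (hinj : Function.Injective φ) : IsCoveringMapOnto φ (range φ) := by
  have hsurj : Function.Surjective (codRestrict φ (range φ) mem_range_self) := by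
    rintro ⟨_, y, rfl⟩
    exact ⟨y, rfl⟩
  have hhomeo : IsHomeomorph (codRestrict φ (range φ) mem_range_self) :=
    isHomeomorph_iff_isEmbedding_surjective.2
      ⟨(hφ.isOpenEmbedding_of_injective hinj).isEmbedding.codRestrict _ _, hsurj⟩
  exact ⟨mem_range_self, isCoveringMap_of_homeomorph (hhomeo.homeomorph _), hsurj⟩

theorem injective_of_deformsIntoNhds [T2Space Y] [ConnectedSpace Y]
    (hY : LocallyPunctureConnected Y) (hφ : IsLocalHomeomorph φ) {T A : Set S}
    (hcov : IsCoveringMap (T.restrictPreimage φ)) (hAT : A ⊆ T) (hA : A ∈ codiscrete S) {y : Y}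
    (hdeform : DeformsIntoNhds A (φ y)) : Function.Injective φ := by
  have hpre : φ ⁻¹' A ∈ codiscrete Y :=
    preimage_mem_codiscrete hφ.continuous hφ.isLocallyInjective hA
  obtain ⟨s, hs⟩ := exists_section_of_deformsIntoNhds hφ hcov hAT hdeform
  exact injective_of_injOn_preimage hφ.continuous hφ.isOpenMap (hY.dense_of_mem_codiscrete hpre)
    (injOn_preimage_of_section hφ.continuous (T2Space.isSeparatedMap φ) hφ.isLocallyInjective
      (hY.isConnected_of_mem_codiscrete hpre).isPreconnected s hs)

end Covering

theorem exists_subset_pair_of_card_le_two {α : Type*} [Nontrivial α] {F : Finset α}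
    (hF : F.card ≤ 2) {x : α} (hx : x ∈ F) : ∃ f, x ≠ f ∧ (F : Set α) ⊆ {x, f} := by
  classical
  have hcard : (F.erase x).card ≤ 1 := by
    rw [Finset.card_erase_of_mem hx]
    lia
  obtain hempty | ⟨f, hf⟩ := (F.erase x).eq_empty_or_nonempty
  · obtain ⟨f, hf⟩ := exists_ne x
    refine ⟨f, hf.symm, fun z hz => Or.inl ?_⟩
    by_contra hzx
    exact Finset.eq_empty_iff_forall_notMem.1 hempty z (Finset.mem_erase.2 ⟨hzx, hz⟩)
  · exact ⟨f, (Finset.ne_of_mem_erase hf).symm, fun z hz => or_iff_not_imp_left.2 fun hzx =>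
      Finset.card_le_one.1 hcard z (Finset.mem_erase.2 ⟨hzx, hz⟩) f hf⟩

theorem injective_of_mem_of_card_le_two {V Y S : Type*} [NormedAddCommGroup V]
    [InnerProductSpace ℝ V] [TopologicalSpace Y] [T2Space Y] [ConnectedSpace Y]
    [TopologicalSpace S] (h : S ≃ₜ Metric.sphere (0 : V) 1)
    (hY : LocallyPunctureConnected Y) {φ : Y → S} (hφ : IsLocalHomeomorph φ) {F : Finset S}
    (hF : F.card ≤ 2) (hcov : IsCoveringMap ((F : Set S)ᶜ.restrictPreimage φ)) {y : Y}
    (hy : φ y ∈ F) : Function.Injective φ := by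
  have : T2Space S := h.symm.t2Space
  obtain ⟨z, hz⟩ := (hY.dense_of_mem_codiscrete (preimage_mem_codiscrete hφ.continuous
    hφ.isLocallyInjective (finite_singleton (φ y)).compl_mem_codiscrete)).nonempty
  have : Nontrivial S := ⟨φ z, φ y, hz⟩
  obtain ⟨f, hyf, hFf⟩ := exists_subset_pair_of_card_le_two hF hy
  exact injective_of_deformsIntoNhds hY hφ hcov (compl_subset_compl.2 hFf)
    (toFinite {φ y, f}).compl_mem_codiscrete (deformsIntoNhds_compl_pair_of_sphere h hyf)

theorem finite_type_monotonicity_general {E V Y S : Type*} [NormedAddCommGroup E]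
    [NormedSpace ℝ E] (hE : 1 < Module.rank ℝ E) [NormedAddCommGroup V] [InnerProductSpace ℝ V]
    [TopologicalSpace Y] [ChartedSpace E Y] [T2Space Y] [ConnectedSpace Y] [TopologicalSpace S]
    (h : S ≃ₜ Metric.sphere (0 : V) 1) {φ : Y → S} (hφ : IsLocalHomeomorph φ) {U : Set Y}
    {F : Finset S} (hF : F.card ≤ 2) (hU : IsCoveringMapOnto (U.domRestrict φ) (F : Set S)ᶜ) :
    ∃ F' : Finset S, F'.card ≤ F.card ∧ IsCoveringMapOnto φ (F' : Set S)ᶜ := by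
  have : T2Space S := h.symm.t2Space
  have : LocallyPathConnectedSpace Y := ChartedSpace.locallyPathConnectedSpace E Y
  have hY : LocallyPunctureConnected Y := .of_chartedSpace hE Y
  have hpath : IsPathConnected (φ ⁻¹' (F : Set S)ᶜ) := hY.isPathConnected_of_mem_codiscrete
    (preimage_mem_codiscrete hφ.continuous hφ.isLocallyInjective
      F.finite_toSet.compl_mem_codiscrete)
  obtain rfl := hU.eq_preimage hφ.continuous (T2Space.isSeparatedMap φ) hφ.isLocallyInjective hpath
  by_cases hmiss : ∀ y, φ y ∉ F
  · exact ⟨F, le_rfl, hU.of_restrict_preimage hmiss⟩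
  · push Not at hmiss
    obtain ⟨_, hcov, hsurj⟩ := hU
    obtain ⟨y, hy⟩ := hmiss
    have hinj : Function.Injective φ := injective_of_mem_of_card_le_two h hY hφ hF hcov hy
    have hrange : (range φ)ᶜ ⊆ F := compl_subset_comm.1 fun x hx =>
      let ⟨z, hz⟩ := hsurj ⟨x, hx⟩
      ⟨z, congrArg Subtype.val hz⟩
    have hfin : (range φ)ᶜ.Finite := F.finite_toSet.subset hrange
    refine ⟨hfin.toFinset, Finset.card_le_card (hfin.toFinset_subset.2 hrange), ?_⟩
    rw [hfin.coe_toFinset, compl_compl]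
    exact isCoveringMapOnto_range_of_injective hφ hinj

/-- Monotonicity of finite type: let d ≥ 2, S a topological d-sphere, Y a connected d-manifold and
φ : Y → S a local homeomorphism. If there is an open U ⊆ Y such that φ|_U is a covering map onto
S ∖ F for a finite set F with |F| ≤ 2, then φ is a covering map onto S ∖ F' for some finite
F' ⊆ S with |F'| ≤ |F|. -/
theorem finite_type_monotonicity {d : ℕ} (hd : 2 ≤ d) {Y S : Type*}
    [TopologicalSpace Y] [ChartedSpace (EuclideanSpace ℝ (Fin d)) Y] [T2Space Y]
    [ConnectedSpace Y] [TopologicalSpace S] [T2Space S]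
    (hS : Nonempty (S ≃ₜ Metric.sphere (0 : EuclideanSpace ℝ (Fin (d + 1))) 1))
    (φ : Y → S) (hφ : IsLocalHomeomorph φ)
    (U : Set Y) (hU : IsOpen U)
    (F : Finset S) (hF : F.card ≤ 2)
    (hmaps : ∀ u : U, φ u ∉ F)
    (hcov : IsCoveringMap (fun u : U => (⟨φ u, hmaps u⟩ : {x : S // x ∉ F})))
    (hsurj : Function.Surjective (fun u : U => (⟨φ u, hmaps u⟩ : {x : S // x ∉ F}))) :
    ∃ F' : Finset S, F'.card ≤ F.card ∧
      ∃ h : ∀ y : Y, φ y ∉ F',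
        IsCoveringMap (fun y : Y => (⟨φ y, h y⟩ : {x : S // x ∉ F'})) ∧
        Function.Surjective (fun y : Y => (⟨φ y, h y⟩ : {x : S // x ∉ F'})) := by
  have hrank : 1 < Module.rank ℝ (EuclideanSpace ℝ (Fin d)) :=
    Module.one_lt_rank_of_one_lt_finrank (by rwa [finrank_euclideanSpace_fin])
  exact finite_type_monotonicity_general hrank hS.some hφ hF ⟨hmaps, hcov, hsurj⟩
end

section
/- In the hyperbolic plane ℍ², let Γ be a complete geodesic, π the nearest-point projection onto Γ, and let x be a point at distance s > 0 from Γ. Let H be the open half-plane bounded by the geodesic through x perpendicular to the segment from x to Γ and not containing Γ. Then the diameter of π(H) in Γ is at most 2·arccosh(coth(s)). -/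
open UpperHalfPlane

/-- The inverse hyperbolic cosine. -/
noncomputable def arccosh (x : ℝ) : ℝ := Real.log (x + Real.sqrt (x ^ 2 - 1))

/-!
Let `z ∈ H`, let `P = π x`, `Q = π z` be the feet on `Γ`, and let `s = d(x, P)`, `b = d(z, Q)`,
`τ = d(P, Q)`. The half-plane enters only through the angle at `x` of the triangle `P x z`, which is
not acute: `cosh s * cosh d(x, z) ≤ cosh d(z, P) = cosh b * cosh τ`. In the hyperboloid model the
components of `x` and `z` orthogonal to `P` and `Q` are spacelike, and the Cauchy–Schwarz inequality
for them reads `cosh s * cosh τ * cosh b ≤ cosh d(x, z) + sinh s * sinh b`. Eliminating `d(x, z)`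
gives `cosh τ ≤ coth s * tanh b ≤ coth s`, so every point of `π H` is within `arccosh (coth s)`
of `P`.
-/

open Real Set

lemma sinh_sub_mul_cosh (a b t : ℝ) :
    sinh (b - a) * cosh t = sinh (b - t) * cosh a + sinh (t - a) * cosh b := by
  simp only [sinh_sub]
  ring

lemma eq_zero_of_forall_le_mul_cosh_add_mul_sinh {a b : ℝ}
    (h : ∀ t, a ≤ a * cosh t + b * sinh t) : b = 0 := by
  have hderiv : HasDerivAt (fun t => a * cosh t + b * sinh t) (a * sinh 0 + b * cosh 0) 0 :=
    ((hasDerivAt_cosh 0).const_mul a).add ((hasDerivAt_sinh 0).const_mul b)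
  have hmin : IsLocalMin (fun t => a * cosh t + b * sinh t) 0 :=
    Filter.Eventually.of_forall fun t => by simpa using h t
  simpa using hmin.hasDerivAt_eq_zero hderiv

lemma arccosh_eq_arcosh (x : ℝ) : arccosh x = arcosh x := rfl

lemma le_arcosh_of_cosh_le {d c : ℝ} (hd : 0 ≤ d) (h : cosh d ≤ c) : d ≤ arcosh c := by
  rw [← arcosh_cosh hd]
  exact (arcosh_le_arcosh (cosh_pos d) ((cosh_pos d).trans_le h)).mpr h

/-- `q` is a nearest-point projection of `z` to `S`. -/
def IsNearestPoint {X : Type*} [PseudoMetricSpace X] (S : Set X) (z q : X) : Prop :=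
  q ∈ S ∧ ∀ w ∈ S, dist z q ≤ dist z w

section HyperboloidModel

variable {V X : Type*} [AddCommGroup V] [Module ℝ V] [PseudoMetricSpace X]
  {B : LinearMap.BilinForm ℝ V} {ι : X → V}

/-- A real symmetric bilinear form with at most one positive direction, as in the ambient space of
the hyperboloid model. The form may be degenerate and the dimension infinite. -/
structure IsLorentzian (B : LinearMap.BilinForm ℝ V) : Prop where
  isSymm : B.IsSymm
  apply_self_nonpos : ∀ ⦃u v⦄, 0 < B u u → B u v = 0 → B v v ≤ 0

namespace IsLorentzian

lemma apply_sq_le (hB : IsLorentzian B) {u v w : V} (hu : 0 < B u u) (hv : B u v = 0)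
    (hw : B u w = 0) : B v w ^ 2 ≤ B v v * B w w := by
  have hcs := LinearMap.BilinForm.apply_sq_le_of_symm
    ((-B).restrict (LinearMap.ker (B u)))
    (fun y => by simpa using hB.apply_self_nonpos hu y.2)
    ⟨fun y y' => by simpa using hB.isSymm.eq y y'⟩ ⟨v, hv⟩ ⟨w, hw⟩
  simpa using hcs

lemma apply_eq_zero_of_null (hB : IsLorentzian B) {u v : V} (hu : 0 < B u u) (hv : B u v = 0)
    (hnull : B v v = 0) (w : V) : B w v = 0 := by
  set w' := w - (B u w / B u u) • u with hw'
  have horth : B u w' = 0 := by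
    simp [hw', hu.ne']
  have hw'v : B w' v = B w v := by
    simp [hw', hv]
  have hcs := hB.apply_sq_le hu horth hv
  rw [hnull, mul_zero, hw'v] at hcs
  exact pow_eq_zero_iff two_ne_zero |>.mp (hcs.antisymm (sq_nonneg _))

end IsLorentzian

/-- `ι` represents the metric space `X` on the hyperboloid `B v v = 1` of a Lorentzian form, with
the hyperbolic distance `arcosh (B v w)`. -/
structure IsHyperboloidModel (B : LinearMap.BilinForm ℝ V) (ι : X → V) : Prop where
  isLorentzian : IsLorentzian B
  apply_eq_cosh_dist : ∀ x y, B (ι x) (ι y) = cosh (dist x y)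

namespace IsHyperboloidModel

lemma apply_self_pos (h : IsHyperboloidModel B ι) (x : X) : 0 < B (ι x) (ι x) := by
  simp [h.apply_eq_cosh_dist]

/-- Stewart's theorem. The linear combination `v` of `ι (γ t)`, `ι (γ a)` and `ι (γ b)` with these
coefficients is null and orthogonal to `γ`, hence orthogonal to every vector. -/
lemma sinh_sub_mul_cosh_dist (h : IsHyperboloidModel B ι) {γ : ℝ → X} (hγ : Isometry γ)
    (z : X) (a b t : ℝ) :
    sinh (b - a) * cosh (dist z (γ t)) =
      sinh (b - t) * cosh (dist z (γ a)) + sinh (t - a) * cosh (dist z (γ b)) := by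
  set v := sinh (b - a) • ι (γ t) - (sinh (b - t) • ι (γ a) + sinh (t - a) • ι (γ b)) with hv
  have happly : ∀ y, B (ι y) v = sinh (b - a) * cosh (dist y (γ t)) -
      (sinh (b - t) * cosh (dist y (γ a)) + sinh (t - a) * cosh (dist y (γ b))) := fun y => by
    simp only [hv, map_sub, map_add, map_smul, smul_eq_mul, h.apply_eq_cosh_dist]
  have horth : ∀ r, B (ι (γ r)) v = 0 := fun r => by
    have hdist : ∀ r', cosh (dist (γ r) (γ r')) = cosh (r' - r) := fun r' => by
      rw [dist_comm, hγ.dist_eq, Real.dist_eq, cosh_abs]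
    have htrig := sinh_sub_mul_cosh (a - r) (b - r) (t - r)
    simp only [sub_sub_sub_cancel_right] at htrig
    simp only [happly, hdist, htrig, sub_self]
  have hnull : B v v = 0 := by
    nth_rw 1 [hv]
    simp [horth]
  rw [← sub_eq_zero, ← happly]
  exact h.isLorentzian.apply_eq_zero_of_null (h.apply_self_pos (γ a)) (horth a) hnull _

lemma cosh_dist_eq_of_isNearestPoint (h : IsHyperboloidModel B ι) {γ : ℝ → X} (hγ : Isometry γ)
    {z p q : X} (hp : IsNearestPoint (range γ) z p) (hq : q ∈ range γ) :
    cosh (dist z q) = cosh (dist z p) * cosh (dist p q) := by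
  obtain ⟨⟨u, rfl⟩, hmin⟩ := hp
  obtain ⟨t, rfl⟩ := hq
  have hsinh : 0 < sinh 1 := sinh_pos_iff.mpr one_pos
  have hformula : ∀ r, sinh 1 * cosh (dist z (γ (u + r))) =
      sinh 1 * cosh (dist z (γ u)) * cosh r +
        (cosh (dist z (γ (u + 1))) - cosh 1 * cosh (dist z (γ u))) * sinh r := fun r => by
    have hstewart := h.sinh_sub_mul_cosh_dist hγ z u (u + 1) (u + r)
    rw [add_sub_cancel_left, add_sub_cancel_left, add_sub_add_left_eq_sub, sinh_sub] at hstewart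
    linear_combination hstewart
  have hslope := eq_zero_of_forall_le_mul_cosh_add_mul_sinh fun r => by
    rw [← hformula r]
    exact mul_le_mul_of_nonneg_left (cosh_strictMonoOn.monotoneOn dist_nonneg dist_nonneg
      (hmin _ (mem_range_self _))) hsinh.le
  have hcancel := hformula (t - u)
  rw [hslope, add_sub_cancel, zero_mul, add_zero, mul_assoc] at hcancel
  rw [mul_left_cancel₀ hsinh.ne' hcancel, dist_comm (γ u), hγ.dist_eq, Real.dist_eq, cosh_abs]

/-- The right angles at `p` and `q` are encoded by the Pythagorean theorem. Equality holds when the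
four points are coplanar with `x` and `z` on the same side of the line `p q`. -/
lemma cosh_mul_cosh_mul_cosh_le_of_right_angles (h : IsHyperboloidModel B ι) {x p q z : X}
    (hp : cosh (dist x q) = cosh (dist x p) * cosh (dist p q))
    (hq : cosh (dist z p) = cosh (dist z q) * cosh (dist p q)) :
    cosh (dist x p) * cosh (dist p q) * cosh (dist z q) ≤
      cosh (dist x z) + sinh (dist x p) * sinh (dist z q) := by
  set v := ι x - cosh (dist x p) • ι p with hv
  set w := ι z - cosh (dist z q) • ι q with hw
  have hpv : B (ι p) v = 0 := by
    simp [hv, h.apply_eq_cosh_dist, dist_comm p x]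
  have hpw : B (ι p) w = 0 := by
    simp [hw, h.apply_eq_cosh_dist, dist_comm p z, hq]
  have hvv : B v v = -sinh (dist x p) ^ 2 := by
    simp only [hv, map_sub, map_smul, LinearMap.sub_apply, LinearMap.smul_apply, smul_eq_mul,
      h.apply_eq_cosh_dist, dist_comm p x, dist_self, cosh_zero]
    linear_combination -cosh_sq (dist x p)
  have hww : B w w = -sinh (dist z q) ^ 2 := by
    simp only [hw, map_sub, map_smul, LinearMap.sub_apply, LinearMap.smul_apply, smul_eq_mul,
      h.apply_eq_cosh_dist, dist_comm q z, dist_self, cosh_zero]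
    linear_combination -cosh_sq (dist z q)
  have hvw : B v w =
      cosh (dist x z) - cosh (dist x p) * cosh (dist p q) * cosh (dist z q) := by
    simp only [hv, hw, map_sub, map_smul, LinearMap.sub_apply, LinearMap.smul_apply, smul_eq_mul,
      h.apply_eq_cosh_dist, dist_comm p z, hp, hq]
    ring
  have hcs := h.isLorentzian.apply_sq_le (h.apply_self_pos p) hpv hpw
  rw [hvv, hww, neg_mul_neg, ← mul_pow] at hcs
  have hsinh : 0 ≤ sinh (dist x p) * sinh (dist z q) :=
    mul_nonneg (sinh_nonneg_iff.mpr dist_nonneg) (sinh_nonneg_iff.mpr dist_nonneg)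
  linarith [neg_le_of_abs_le (abs_le_of_sq_le_sq hcs hsinh)]

lemma cosh_dist_le_coth_of_right_angles (h : IsHyperboloidModel B ι) {x p q z : X}
    (hpos : 0 < dist x p) (hp : cosh (dist x q) = cosh (dist x p) * cosh (dist p q))
    (hq : cosh (dist z p) = cosh (dist z q) * cosh (dist p q))
    (hx : cosh (dist x p) * cosh (dist x z) ≤ cosh (dist z p)) :
    cosh (dist p q) ≤ cosh (dist x p) / sinh (dist x p) := by
  have hquad := h.cosh_mul_cosh_mul_cosh_le_of_right_angles hp hq
  set s := dist x p
  set b := dist z q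
  set τ := dist p q
  have hs : 0 < sinh s := sinh_pos_iff.mpr hpos
  rw [le_div_iff₀ hs]
  refine le_of_mul_le_mul_right ?_ (mul_pos hs (cosh_pos b))
  calc cosh τ * sinh s * (sinh s * cosh b)
      = cosh s * (cosh s * cosh τ * cosh b) - cosh b * cosh τ := by
        linear_combination -(cosh τ * cosh b) * cosh_sq s
    _ ≤ cosh s * (cosh (dist x z) + sinh s * sinh b) - cosh s * cosh (dist x z) := by
        rw [← hq]
        gcongr
    _ = cosh s * (sinh s * sinh b) := by ring
    _ ≤ cosh s * (sinh s * cosh b) := by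
        gcongr
        exact (sinh_lt_cosh b).le

lemma dist_le_arcosh_coth_of_isNearestPoint (h : IsHyperboloidModel B ι) {γ : ℝ → X}
    (hγ : Isometry γ) {x p q z : X} (hpos : 0 < dist x p)
    (hp : IsNearestPoint (range γ) x p) (hq : IsNearestPoint (range γ) z q)
    (hx : cosh (dist x p) * cosh (dist x z) ≤ cosh (dist z p)) :
    dist p q ≤ arcosh (cosh (dist x p) / sinh (dist x p)) :=
  le_arcosh_of_cosh_le dist_nonneg <| h.cosh_dist_le_coth_of_right_angles hpos
    (h.cosh_dist_eq_of_isNearestPoint hγ hp hq.1)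
    (dist_comm p q ▸ h.cosh_dist_eq_of_isNearestPoint hγ hq hp.1) hx

end IsHyperboloidModel

end HyperboloidModel

/-- The Lorentzian form of signature `(1, 2)` on `ℝ³` in light-cone coordinates: the polarization
of the determinant of the symmetric matrix `!![v.1, v.2.1; v.2.1, v.2.2]`. -/
noncomputable def lightConeForm : LinearMap.BilinForm ℝ (ℝ × ℝ × ℝ) :=
  LinearMap.mk₂ ℝ (fun v w => (v.1 * w.2.2 + v.2.2 * w.1) / 2 - v.2.1 * w.2.1)
    (fun _ _ _ => by simp only [Prod.fst_add, Prod.snd_add]; ring)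
    (fun _ _ _ => by simp only [Prod.smul_fst, Prod.smul_snd, smul_eq_mul]; ring)
    (fun _ _ _ => by simp only [Prod.fst_add, Prod.snd_add]; ring)
    (fun _ _ _ => by simp only [Prod.smul_fst, Prod.smul_snd, smul_eq_mul]; ring)

lemma lightConeForm_apply (v w : ℝ × ℝ × ℝ) :
    lightConeForm v w = (v.1 * w.2.2 + v.2.2 * w.1) / 2 - v.2.1 * w.2.1 := rfl

lemma isLorentzian_lightConeForm : IsLorentzian lightConeForm where
  isSymm := ⟨fun v w => by simp only [lightConeForm_apply]; ring⟩
  apply_self_nonpos := by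
    rintro ⟨p, q, r⟩ ⟨u, v, w⟩ htime horth
    simp only [lightConeForm_apply] at *
    have hdet : 0 < p * r - q ^ 2 := by linarith
    have hp : p ≠ 0 := by
      rintro rfl
      nlinarith [sq_nonneg q]
    have hsq : p ^ 2 * (v ^ 2 - u * w) = (p * v - q * u) ^ 2 + (p * r - q ^ 2) * u ^ 2 := by
      linear_combination (-2 * p * u) * horth
    have hnonneg : 0 ≤ p ^ 2 * (v ^ 2 - u * w) := by
      rw [hsq]
      positivity
    linarith [nonneg_of_mul_nonneg_right hnonneg (by positivity)]

/-- The embedding of the upper half-plane into the hyperboloid of `lightConeForm`: `z` goes to the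
symmetric matrix, of determinant `1`, of the quadratic form `|X + z Y|² / im z`. -/
noncomputable def lightConeEmbedding (z : ℍ) : ℝ × ℝ × ℝ :=
  (1 / z.im, z.re / z.im, (z.re ^ 2 + z.im ^ 2) / z.im)

lemma isHyperboloidModel_lightConeEmbedding :
    IsHyperboloidModel lightConeForm lightConeEmbedding where
  isLorentzian := isLorentzian_lightConeForm
  apply_eq_cosh_dist z w := by
    have hz := z.im_pos.ne'
    have hw := w.im_pos.ne'
    rw [cosh_dist', lightConeForm_apply]
    simp only [lightConeEmbedding]
    field_simp
    ring

/-- The point of the closed upper half-plane with real part `v.1` and squared modulus `v.2`,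
provided that `v.1 ^ 2 ≤ v.2`; otherwise the square root is `0`. These coordinates play the role of
the Klein model: hyperbolic half-planes become affine. -/
noncomputable def ofReNormSq (v : ℝ × ℝ) : ℂ :=
  ⟨v.1, √(v.2 - v.1 ^ 2)⟩

lemma continuous_ofReNormSq : Continuous ofReNormSq := by
  have hsum : ofReNormSq = fun v => (v.1 : ℂ) + (√(v.2 - v.1 ^ 2) : ℂ) * Complex.I :=
    funext fun v => Complex.mk_eq_add_mul_I _ _
  rw [hsum]
  fun_prop

lemma image_coe_setOf_re_normSq_mem (T : Set (ℝ × ℝ)) :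
    UpperHalfPlane.coe '' {z : ℍ | (z.re, z.re ^ 2 + z.im ^ 2) ∈ T} =
      ofReNormSq '' ({v | v.1 ^ 2 < v.2} ∩ T) := by
  ext ζ
  constructor
  · rintro ⟨z, hz, rfl⟩
    refine ⟨(z.re, z.re ^ 2 + z.im ^ 2), ⟨lt_add_of_pos_right _ (pow_pos z.im_pos 2), hz⟩, ?_⟩
    rw [ofReNormSq, add_sub_cancel_left, sqrt_sq z.im_pos.le]
    exact Complex.eta _
  · rintro ⟨⟨r, n⟩, ⟨hrn, hT⟩, rfl⟩
    have hpos : 0 < n - r ^ 2 := sub_pos.mpr hrn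
    refine ⟨⟨ofReNormSq (r, n), sqrt_pos.mpr hpos⟩, ?_, rfl⟩
    change (r, r ^ 2 + √(n - r ^ 2) ^ 2) ∈ T
    rwa [sq_sqrt hpos.le, add_sub_cancel]

lemma isPreconnected_setOf_re_normSq_mem {T : Set (ℝ × ℝ)} (hT : Convex ℝ T) :
    IsPreconnected {z : ℍ | (z.re, z.re ^ 2 + z.im ^ 2) ∈ T} := by
  have hparabola : Convex ℝ {v : ℝ × ℝ | v.1 ^ 2 < v.2} := by
    simpa using even_two.convexOn_pow.convex_strict_epigraph (𝕜 := ℝ)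
  rw [← isEmbedding_coe.isInducing.isPreconnected_image, image_coe_setOf_re_normSq_mem]
  exact (hparabola.inter hT).isPreconnected.image _ continuous_ofReNormSq.continuousOn

lemma isPreconnected_setOf_cosh_dist_lt (c : ℝ) (p q : ℍ) :
    IsPreconnected {z : ℍ | cosh (dist z p) < c * cosh (dist z q)} := by
  have hp := p.im_pos.ne'
  have hq := q.im_pos.ne'
  set a₁ := 2 * (c * q.re / q.im - p.re / p.im)
  set a₂ := 1 / p.im - c / q.im
  set b := c * (q.re ^ 2 + q.im ^ 2) / q.im - (p.re ^ 2 + p.im ^ 2) / p.im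
  have hT : Convex ℝ {v : ℝ × ℝ | a₁ * v.1 + a₂ * v.2 < b} :=
    convex_halfSpace_lt (a₁ • LinearMap.fst ℝ ℝ ℝ + a₂ • LinearMap.snd ℝ ℝ ℝ).isLinear b
  convert isPreconnected_setOf_re_normSq_mem hT using 3 with z
  have hz : 0 < 2 * z.im := mul_pos two_pos z.im_pos
  have hdiff : 2 * z.im * (cosh (dist z p) - c * cosh (dist z q)) =
      a₁ * z.re + a₂ * (z.re ^ 2 + z.im ^ 2) - b := by
    have hz_ne := z.im_pos.ne'
    simp only [cosh_dist', a₁, a₂, b]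
    field_simp
    ring
  rw [← mul_lt_mul_iff_right₀ hz, ← sub_neg, ← mul_sub, hdiff, sub_neg, mem_ofPred_eq]

lemma mem_connectedComponentIn_of_cosh_dist_lt {γ : ℝ → ℍ} (hγ : Isometry γ) {p x z : ℍ}
    (hx : IsNearestPoint (range γ) p x)
    (hz : cosh (dist z p) < cosh (dist x p) * cosh (dist x z)) :
    p ∈ connectedComponentIn (range γ)ᶜ z := by
  rw [dist_comm x z] at hz
  have hside : {y | cosh (dist y p) < cosh (dist x p) * cosh (dist y x)} ⊆ (range γ)ᶜ := by
    intro y hy hyγ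
    have hpyth := isHyperboloidModel_lightConeEmbedding.cosh_dist_eq_of_isNearestPoint hγ hx hyγ
    rw [mem_ofPred_eq, dist_comm y p, hpyth, dist_comm p x, dist_comm y x] at hy
    exact hy.false
  have hp : cosh (dist p p) < cosh (dist x p) * cosh (dist p x) := by
    have hxp : x ≠ p := by
      rintro rfl
      simp at hz
    have hcosh : 1 < cosh (dist x p) := one_lt_cosh.mpr (dist_ne_zero.mpr hxp)
    rw [dist_self, cosh_zero, dist_comm p x]
    exact one_lt_mul_of_lt_of_le hcosh hcosh.le
  exact (isPreconnected_setOf_cosh_dist_lt _ _ _).subset_connectedComponentIn hz hside hp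

/-- In the hyperbolic plane, let Γ = range γ₁ be a complete geodesic, p the nearest-point
projection onto Γ, and x a point at distance s > 0 from Γ.  Let H be the open half-plane (a
connected component of the complement of the complete geodesic γ₂ through x which is perpendicular
to the segment from x to Γ, i.e. along which x is the closest point to p x) not containing Γ.
Then the diameter of p(H) in Γ is at most 2·arccosh(coth(s)). -/
theorem projection_of_halfplane_bounded
    (γ₁ γ₂ : ℝ → UpperHalfPlane) (h₁ : Isometry γ₁) (h₂ : Isometry γ₂)
    (p : UpperHalfPlane → UpperHalfPlane)
    (hp : ∀ z, p z ∈ Set.range γ₁ ∧ ∀ w ∈ Set.range γ₁, dist z (p z) ≤ dist z w)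
    (x : UpperHalfPlane) (s : ℝ) (hs : 0 < s) (hxΓ : dist x (p x) = s)
    (hx : γ₂ 0 = x)
    (hperp : ∀ t : ℝ, dist (p x) x ≤ dist (p x) (γ₂ t))
    (H : Set UpperHalfPlane) (z₀ : UpperHalfPlane) (hz₀ : z₀ ∈ (Set.range γ₂)ᶜ)
    (hH : H = connectedComponentIn (Set.range γ₂)ᶜ z₀)
    (hdisj : Set.range γ₁ ∩ H = ∅) :
    ∀ z ∈ H, ∀ w ∈ H,
      dist (p z) (p w) ≤ 2 * arccosh (Real.cosh s / Real.sinh s) := by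
  subst hxΓ hH
  have hfoot : IsNearestPoint (range γ₂) (p x) x := ⟨⟨0, hx⟩, forall_mem_range.mpr hperp⟩
  have hdist : ∀ z ∈ connectedComponentIn (range γ₂)ᶜ z₀,
      dist (p x) (p z) ≤ arccosh (cosh (dist x (p x)) / sinh (dist x (p x))) := by
    intro z hz
    have hobtuse : cosh (dist x (p x)) * cosh (dist x z) ≤ cosh (dist z (p x)) := by
      by_contra! hlt
      have hpx := mem_connectedComponentIn_of_cosh_dist_lt h₂ hfoot hlt
      rw [← connectedComponentIn_eq hz] at hpx
      exact hdisj.subset ⟨(hp x).1, hpx⟩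
    rw [arccosh_eq_arcosh]
    exact isHyperboloidModel_lightConeEmbedding.dist_le_arcosh_coth_of_isNearestPoint h₁ hs
      (hp x) (hp z) hobtuse
  intro z hz w hw
  linarith [dist_triangle_left (p z) (p w) (p x), hdist z hz, hdist w hw]
end
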